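/- arXiv:1502.02743 — 3 statements merged into one kernel-verified Lean document; each statement's English description precedes it below -/
import Mathlib

section
/- For w > 0, the integral ∫₀^∞ sin(wt)/(e^{2πt} − 1) dt equals (1/2)(1/(e^w − 1) + 1/2 − 1/w). -/
open Real MeasureTheory Set

/-!
Expanding `1 / (exp (a t) - 1)` as a geometric series in `exp (-a t)` and integrating term by term
turns the integral into `∑ w / ((n a)² + w²)`, the sum being over `n ≥ 1`. The bound
`‖sin z‖ ≤ ‖z‖ exp |Im z|` makes the `L¹` norms of the terms `O(1 / n²)`, which justifies the
exchange. For `a = 2π` the series is the partial fraction expansion of `π cot (π x)` at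
`x = w / (2πi)`, where the cotangent is a rational function of `exp w`.
-/

lemma norm_cos_le_exp_abs_im (z : ℂ) : ‖Complex.cos z‖ ≤ exp |z.im| := by
  have h₁ : ‖Complex.exp (z * Complex.I)‖ ≤ exp |z.im| := by
    simpa [Complex.norm_exp] using neg_le_abs z.im
  have h₂ : ‖Complex.exp (-z * Complex.I)‖ ≤ exp |z.im| := by
    simpa [Complex.norm_exp] using le_abs_self z.im
  rw [Complex.cos, norm_div, Complex.norm_two]
  linarith [norm_add_le (Complex.exp (z * Complex.I)) (Complex.exp (-z * Complex.I))]

lemma norm_sin_le_norm_mul_exp_abs_im (z : ℂ) : ‖Complex.sin z‖ ≤ ‖z‖ * exp |z.im| := by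
  let strip : Set ℂ := Complex.imLm ⁻¹' Icc (-|z.im|) |z.im|
  have convex_strip : Convex ℝ strip := (convex_Icc _ _).linear_preimage _
  have norm_deriv_le : ∀ u ∈ strip, ‖deriv Complex.sin u‖ ≤ exp |z.im| := fun u hu ↦ by
    rw [Complex.deriv_sin]
    exact (norm_cos_le_exp_abs_im u).trans (exp_le_exp.2 (abs_le.2 hu))
  have h := convex_strip.norm_image_sub_le_of_norm_deriv_le
    (fun u _ ↦ Complex.differentiableAt_sin) norm_deriv_le
    (show (0 : ℂ) ∈ strip by simp [strip]) (show z ∈ strip from abs_le.1 le_rfl)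
  simpa [mul_comm] using h

section LaplaceTransform

variable {w a : ℂ}

lemma sin_mul_exp_neg_eq (w a t : ℂ) :
    Complex.sin (w * t) * Complex.exp (-a * t) =
      (Complex.exp ((-a - w * Complex.I) * t) - Complex.exp ((-a + w * Complex.I) * t)) *
        (Complex.I / 2) := by
  rw [Complex.sin, sub_mul (-a), add_mul (-a), sub_eq_add_neg (-a * t), Complex.exp_add,
    Complex.exp_add]
  ring_nf

lemma re_neg_sub_mul_I_neg (h : |w.im| < a.re) : (-a - w * Complex.I).re < 0 := by
  simpa using (le_abs_self w.im).trans_lt h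

lemma re_neg_add_mul_I_neg (h : |w.im| < a.re) : (-a + w * Complex.I).re < 0 := by
  simpa using neg_lt.1 ((neg_le_abs w.im).trans_lt h)

lemma integrableOn_sin_mul_exp_neg_Ioi (h : |w.im| < a.re) :
    IntegrableOn (fun t : ℝ ↦ Complex.sin (w * t) * Complex.exp (-a * t)) (Ioi 0) := by
  simp only [sin_mul_exp_neg_eq]
  exact ((integrableOn_exp_mul_complex_Ioi (re_neg_sub_mul_I_neg h) 0).sub
    (integrableOn_exp_mul_complex_Ioi (re_neg_add_mul_I_neg h) 0)).mul_const _

lemma integral_sin_mul_exp_neg_Ioi (h : |w.im| < a.re) :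
    ∫ t : ℝ in Ioi 0, Complex.sin (w * t) * Complex.exp (-a * t) = w / (a ^ 2 + w ^ 2) := by
  have hsub := re_neg_sub_mul_I_neg h
  have hadd := re_neg_add_mul_I_neg h
  have hsub₀ : -a - w * Complex.I ≠ 0 := fun h₀ ↦ by simp [h₀] at hsub
  have hadd₀ : -a + w * Complex.I ≠ 0 := fun h₀ ↦ by simp [h₀] at hadd
  have hfactor : a ^ 2 + w ^ 2 = (-a - w * Complex.I) * (-a + w * Complex.I) := by
    linear_combination w ^ 2 * Complex.I_sq
  simp only [sin_mul_exp_neg_eq]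
  rw [integral_mul_const, integral_sub (integrableOn_exp_mul_complex_Ioi hsub 0)
    (integrableOn_exp_mul_complex_Ioi hadd 0), integral_exp_mul_complex_Ioi hsub,
    integral_exp_mul_complex_Ioi hadd, hfactor]
  simp only [Complex.ofReal_zero, mul_zero, Complex.exp_zero]
  field_simp
  linear_combination -2 * w * Complex.I_sq

lemma integral_mul_exp_neg_Ioi {r : ℝ} (hr : 0 < r) :
    ∫ t in Ioi (0 : ℝ), t * exp (-(r * t)) = 1 / r ^ 2 := by
  simpa [Gamma_two, show (2 : ℝ) - 1 = 1 by norm_num] using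
    integral_rpow_mul_exp_neg_mul_Ioi two_pos hr

lemma integral_norm_sin_mul_exp_neg_Ioi_le (h : |w.im| < a.re) :
    ∫ t : ℝ in Ioi 0, ‖Complex.sin (w * t) * Complex.exp (-a * t)‖ ≤
      ‖w‖ / (a.re - |w.im|) ^ 2 := by
  have hr : 0 < a.re - |w.im| := sub_pos.2 h
  have hint : IntegrableOn (fun t ↦ t * exp (-((a.re - |w.im|) * t))) (Ioi 0) :=
    .of_integral_ne_zero (by rw [integral_mul_exp_neg_Ioi hr]; positivity)
  rw [div_eq_mul_one_div, ← integral_mul_exp_neg_Ioi hr, ← integral_const_mul]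
  refine setIntegral_mono_on (integrableOn_sin_mul_exp_neg_Ioi h).norm (hint.const_mul _)
    measurableSet_Ioi fun t (ht : 0 < t) ↦ ?_
  calc ‖Complex.sin (w * t) * Complex.exp (-a * t)‖
      ≤ ‖w * t‖ * exp |(w * t).im| * exp (-a * t).re := by
        rw [norm_mul, Complex.norm_exp]
        gcongr
        exact norm_sin_le_norm_mul_exp_abs_im _
    _ = ‖w‖ * (t * exp (-((a.re - |w.im|) * t))) := by
        have hexponent : |(w * t).im| + (-a * t).re = -((a.re - |w.im|) * t) := by
          simp only [Complex.mul_im, Complex.mul_re, Complex.neg_re, Complex.ofReal_re,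
            Complex.ofReal_im, mul_zero, zero_add, sub_zero, abs_mul, abs_of_pos ht]
          ring
        rw [mul_assoc, ← exp_add, hexponent, norm_mul, Complex.norm_of_nonneg ht.le, mul_assoc]

end LaplaceTransform

section TermwiseIntegration

variable {w a : ℂ}

lemma hasSum_exp_neg_nat_add_one_mul {z : ℂ} (hz : 0 < z.re) :
    HasSum (fun n : ℕ ↦ Complex.exp (-((n + 1) * z))) (1 / (Complex.exp z - 1)) := by
  have hlt : ‖Complex.exp (-z)‖ < 1 := by simpa [Complex.norm_exp] using hz
  convert! (hasSum_geometric_of_norm_lt_one hlt).mul_left (Complex.exp (-z)) using 1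
  · ext n
    rw [← Complex.exp_nat_mul, ← Complex.exp_add]
    ring_nf
  · rw [Complex.exp_neg, ← mul_inv, mul_sub, mul_one, mul_inv_cancel₀ (Complex.exp_ne_zero z),
      one_div]

lemma nat_add_one_mul_re_sub_abs_im_le (w a : ℂ) (n : ℕ) :
    (n + 1) * (a.re - |w.im|) ≤ ((n + 1) * a).re - |w.im| := by
  have hre : ((n + 1) * a).re = (n + 1) * a.re := by simp
  rw [hre]
  linarith [mul_nonneg n.cast_nonneg (abs_nonneg w.im)]

lemma abs_im_lt_re_nat_add_one_mul (h : |w.im| < a.re) (n : ℕ) :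
    |w.im| < ((n + 1) * a).re :=
  sub_pos.1 ((mul_pos n.cast_add_one_pos (sub_pos.2 h)).trans_le
    (nat_add_one_mul_re_sub_abs_im_le w a n))

lemma summable_integral_norm_sin_mul_exp_neg (h : |w.im| < a.re) :
    Summable fun n : ℕ ↦
      ∫ t : ℝ in Ioi 0, ‖Complex.sin (w * t) * Complex.exp (-((n + 1) * a) * t)‖ := by
  have hr : 0 < a.re - |w.im| := sub_pos.2 h
  have hsum : Summable fun n : ℕ ↦ ‖w‖ / (a.re - |w.im|) ^ 2 * (1 / ((n + 1 : ℕ) : ℝ) ^ 2) :=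
    ((summable_nat_add_iff 1).2 (summable_one_div_nat_pow.2 one_lt_two)).mul_left _
  refine .of_nonneg_of_le (fun n ↦ integral_nonneg fun t ↦ norm_nonneg _) (fun n ↦ ?_) hsum
  calc ∫ t : ℝ in Ioi 0, ‖Complex.sin (w * t) * Complex.exp (-((n + 1) * a) * t)‖
      ≤ ‖w‖ / (((n + 1) * a).re - |w.im|) ^ 2 :=
        integral_norm_sin_mul_exp_neg_Ioi_le (abs_im_lt_re_nat_add_one_mul h n)
    _ ≤ ‖w‖ / ((n + 1) * (a.re - |w.im|)) ^ 2 := by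
        gcongr
        exact nat_add_one_mul_re_sub_abs_im_le w a n
    _ = ‖w‖ / (a.re - |w.im|) ^ 2 * (1 / ((n + 1 : ℕ) : ℝ) ^ 2) := by
        push_cast
        field_simp

lemma integral_sin_div_exp_sub_one_eq_tsum (h : |w.im| < a.re) :
    ∫ t : ℝ in Ioi 0, Complex.sin (w * t) / (Complex.exp (a * t) - 1) =
      ∑' n : ℕ, w / (((n + 1) * a) ^ 2 + w ^ 2) := by
  have expand : ∀ t ∈ Ioi (0 : ℝ), Complex.sin (w * t) / (Complex.exp (a * t) - 1) =
      ∑' n : ℕ, Complex.sin (w * t) * Complex.exp (-((n + 1) * a) * t) := fun t ht ↦ by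
    have hre : 0 < (a * t).re := by
      simpa using mul_pos ((abs_nonneg w.im).trans_lt h) ht
    simpa [div_eq_mul_inv, mul_assoc] using
      ((hasSum_exp_neg_nat_add_one_mul hre).mul_left (Complex.sin (w * t))).tsum_eq.symm
  rw [setIntegral_congr_fun measurableSet_Ioi expand, ← integral_tsum_of_summable_integral_norm
    (fun n ↦ integrableOn_sin_mul_exp_neg_Ioi (abs_im_lt_re_nat_add_one_mul h n))
    (summable_integral_norm_sin_mul_exp_neg h)]
  exact tsum_congr fun n ↦ integral_sin_mul_exp_neg_Ioi (abs_im_lt_re_nat_add_one_mul h n)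

end TermwiseIntegration

section PartialFractions

variable {w : ℂ}

lemma div_two_pi_I_mem_integerComplement (hw : Complex.exp w ≠ 1) :
    w / (2 * π * Complex.I) ∈ Complex.integerComplement := by
  rintro ⟨m, hm⟩
  exact hw (Complex.exp_eq_one_iff.2 ⟨m, by rw [hm, div_mul_cancel₀ _ Complex.two_pi_I_ne_zero]⟩)

lemma cot_pi_mul_div_two_pi_I (w : ℂ) :
    Complex.cot (π * (w / (2 * π * Complex.I))) =
      Complex.I * ((Complex.exp w + 1) / (Complex.exp w - 1)) := by
  have hexponent : 2 * Complex.I * (π * (w / (2 * π * Complex.I))) = w := by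
    field_simp
  rw [Complex.cot_eq_exp_ratio, hexponent, div_mul_eq_div_div_swap,
    ← neg_sub (Complex.exp w), div_neg, div_eq_mul_inv _ Complex.I, Complex.inv_I]
  ring

lemma cotTerm_div_two_pi_I (hw : Complex.exp w ≠ 1) (n : ℕ) :
    cotTerm (w / (2 * π * Complex.I)) n =
      4 * π * Complex.I * (w / (((n + 1) * (2 * π)) ^ 2 + w ^ 2)) := by
  have hx := div_two_pi_I_mem_integerComplement hw
  have hsub : w / (2 * π * Complex.I) - (n + 1) ≠ 0 := by
    simpa [sub_eq_add_neg] using Complex.integerComplement_add_ne_zero hx (-(n + 1))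
  have hadd : w / (2 * π * Complex.I) + (n + 1) ≠ 0 := by
    simpa using Complex.integerComplement_add_ne_zero hx (n + 1)
  have hfactor : ((n + 1) * (2 * π)) ^ 2 + w ^ 2 = (2 * π * Complex.I) ^ 2 *
      ((w / (2 * π * Complex.I) - (n + 1)) * (w / (2 * π * Complex.I) + (n + 1))) := by
    field_simp
    linear_combination ((n + 1) * (2 * π)) ^ 2 * Complex.I_sq
  rw [hfactor, cotTerm, div_add_div _ _ hsub hadd]
  field_simp
  ring

lemma tsum_div_nat_add_one_mul_two_pi_sq_add_sq (hw : Complex.exp w ≠ 1) :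
    ∑' n : ℕ, w / (((n + 1) * (2 * π)) ^ 2 + w ^ 2) =
      (1 / 2) * (1 / (Complex.exp w - 1) + 1 / 2 - 1 / w) := by
  have hw₀ : w ≠ 0 := by rintro rfl; simp at hw
  have hexp : Complex.exp w - 1 ≠ 0 := sub_ne_zero.2 hw
  have hseries := cot_series_rep' (div_two_pi_I_mem_integerComplement hw)
  rw [tsum_congr (cotTerm_div_two_pi_I hw), tsum_mul_left, cot_pi_mul_div_two_pi_I] at hseries
  have hπI : 4 * π * Complex.I ≠ 0 := by simp [pi_ne_zero]
  apply mul_left_cancel₀ hπI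
  rw [← hseries]
  field_simp
  ring

end PartialFractions

lemma exp_ne_one_of_abs_im_lt_two_pi {w : ℂ} (hw : w ≠ 0) (him : |w.im| < 2 * π) :
    Complex.exp w ≠ 1 := by
  intro hexp
  obtain ⟨m, rfl⟩ := Complex.exp_eq_one_iff.1 hexp
  have hm : |(m : ℝ)| < 1 :=
    (mul_lt_iff_lt_one_left two_pi_pos).1 (by simpa [abs_mul, abs_of_pos pi_pos] using him)
  have hm₀ : m = 0 := Int.abs_lt_one_iff.1 (by exact_mod_cast hm)
  simp [hm₀] at hw

theorem stmt_0_general {w : ℂ} (hw : w ≠ 0) (him : |w.im| < 2 * π) :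
    ∫ t : ℝ in Ioi 0, Complex.sin (w * t) / (Complex.exp (2 * π * t) - 1) =
      (1 / 2) * (1 / (Complex.exp w - 1) + 1 / 2 - 1 / w) := by
  rw [integral_sin_div_exp_sub_one_eq_tsum (by simpa using him),
    tsum_div_nat_add_one_mul_two_pi_sq_add_sq (exp_ne_one_of_abs_im_lt_two_pi hw him)]

theorem stmt_0 (w : ℝ) (hw : 0 < w) :
    ∫ t in Ioi (0 : ℝ), Real.sin (w * t) / (Real.exp (2 * π * t) - 1) =
      (1 / 2) * (1 / (Real.exp w - 1) + 1 / 2 - 1 / w) := by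
  rw [← Complex.ofReal_inj, ← integral_complex_ofReal]
  push_cast
  exact stmt_0_general (w := w) (by exact_mod_cast hw.ne') (by simp [pi_pos])
end

section
/- Hermite's formula: for Re(a) > 0 and s ∈ ℂ with s ≠ 1, ζ(s,a) = a^{−s}/2 + a^{1−s}/(s−1) + 2 ∫₀^∞ sin(s·arctan(t/a)) / ((a² + t²)^{s/2} (e^{2πt} − 1)) dt, where this gives the analytic continuation of the Hurwitz zeta function. -/
open Real Complex MeasureTheory Set Finset

/-- The analytically continued Hurwitz zeta function `ζ(s, a)` for real `a > 0`,
expressed via Mathlib's periodic Hurwitz zeta by removing the initial terms. -/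
noncomputable def HZ (s : ℂ) (a : ℝ) : ℂ :=
  HurwitzZeta.hurwitzZeta (a : UnitAddCircle) s -
    ∑ j ∈ Finset.range (⌈a⌉ - 1).toNat, ((a : ℂ) - ((⌈a⌉ : ℤ) - 1) + j) ^ (-s)

/-! For `1 < re s`, `Γ(s) ζ(s, a)` is the Mellin transform at `s` of `e^{-ax} / (1 - e^{-x})`.
Legendre's formula `1 / (1 - e^{-x}) = 1/2 + 1/x + 2 ∫ sin (xt) / (e^{2πt} - 1) dt`, which is the
partial fraction expansion of the cotangent with each term written as the Laplace transform of a
sine, splits it into two Gamma integrals and a double integral. After exchanging the order of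
integration, the inner integral is a combination of the Gamma integrals with complex rates
`a ± it`, and the polar form of `a ± it` turns it into Hermite's integrand. Hermite's integral is
entire in `s`, so the identity extends to all `s ≠ 1`. -/

section HolomorphicIntegral

open Filter Topology

lemma aestronglyMeasurable_of_hasDerivAt {𝕜 α E : Type*} [NontriviallyNormedField 𝕜]
    [NormedAddCommGroup E] [NormedSpace 𝕜 E] [MeasurableSpace α] {μ : Measure α}
    {F : 𝕜 → α → E} {F' : α → E} {z₀ : 𝕜}
    (hF_meas : ∀ᶠ z in 𝓝 z₀, AEStronglyMeasurable (F z) μ)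
    (hF_deriv : ∀ᵐ t ∂μ, HasDerivAt (F · t) (F' t) z₀) : AEStronglyMeasurable F' μ := by
  obtain ⟨u, hu, hu_meas⟩ := exists_seq_forall_of_frequently
    (hF_meas.filter_mono nhdsWithin_le_nhds : ∀ᶠ z in 𝓝[≠] z₀, _).frequently
  refine aestronglyMeasurable_of_tendsto_ae atTop (f := fun n t ↦ slope (F · t) z₀ (u n))
    (fun n ↦ ?_) (hF_deriv.mono fun t ht ↦ (hasDerivAt_iff_tendsto_slope.1 ht).comp hu)
  exact ((hu_meas n).sub hF_meas.self_of_nhds).const_smul (u n - z₀)⁻¹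

theorem differentiableOn_integral_of_dominated {α E : Type*} [NormedAddCommGroup E]
    [NormedSpace ℂ E] [MeasurableSpace α] {μ : Measure α} {F : ℂ → α → E} {U : Set ℂ}
    {bound : α → ℝ} (hU : IsOpen U) (hF_meas : ∀ z ∈ U, AEStronglyMeasurable (F z) μ)
    (hF_diff : ∀ᵐ t ∂μ, DifferentiableOn ℂ (F · t) U)
    (hF_bound : ∀ᵐ t ∂μ, ∀ z ∈ U, ‖F z t‖ ≤ bound t) (hbound : Integrable bound μ) :
    DifferentiableOn ℂ (fun z ↦ ∫ t, F z t ∂μ) U := by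
  intro z₀ hz₀
  obtain ⟨R, hR, hRU⟩ := Metric.isOpen_iff.1 hU z₀ hz₀
  have hU_nhds : ∀ᶠ z in 𝓝 z₀, z ∈ U := hU.mem_nhds hz₀
  have hasDeriv : ∀ᵐ t ∂μ, ∀ z ∈ U, HasDerivAt (F · t) (deriv (F · t) z) z :=
    hF_diff.mono fun t ht z hz ↦ (ht.differentiableAt (hU.mem_nhds hz)).hasDerivAt
  have closedBall_subset {z : ℂ} (hz : z ∈ Metric.ball z₀ (R / 2)) :
      Metric.closedBall z (R / 4) ⊆ U := by
    refine (Metric.closedBall_subset_ball' ?_).trans hRU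
    linarith [Metric.mem_ball.1 hz]
  -- Cauchy's estimate turns the bound on `F` into one on its derivative, on a smaller ball.
  have deriv_bound : ∀ᵐ t ∂μ, ∀ z ∈ Metric.ball z₀ (R / 2),
      ‖deriv (F · t) z‖ ≤ bound t / (R / 4) := by
    filter_upwards [hF_diff, hF_bound] with t ht hbt z hz
    refine norm_deriv_le_of_forall_mem_sphere_norm_le (by positivity) ?_
      fun w hw ↦ hbt w (closedBall_subset hz (Metric.sphere_subset_closedBall hw))
    exact (ht.mono (closedBall_subset hz)).diffContOnCl_ball subset_rfl
  refine (hasDerivAt_integral_of_dominated_loc_of_deriv_le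
    (Metric.ball_mem_nhds z₀ (half_pos hR)) (hU_nhds.mono hF_meas)
    (hbound.mono' (hF_meas z₀ hz₀) (hF_bound.mono fun t ht ↦ ht z₀ hz₀))
    (aestronglyMeasurable_of_hasDerivAt (hU_nhds.mono hF_meas)
      (hasDeriv.mono fun t ht ↦ ht z₀ hz₀)) deriv_bound (hbound.div_const _)
    (hasDeriv.mono fun t ht z hz ↦ ht z ?_)).2.differentiableAt.differentiableWithinAt
  exact closedBall_subset hz (Metric.mem_closedBall_self (by positivity))

lemma eqOn_re_pos_of_eq_ofReal {E : Type*} [NormedAddCommGroup E] [NormedSpace ℂ E]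
    [CompleteSpace E] {f g : ℂ → E} (hf : DifferentiableOn ℂ f {z | 0 < z.re})
    (hg : DifferentiableOn ℂ g {z | 0 < z.re}) (hfg : ∀ r : ℝ, 0 < r → f r = g r) :
    EqOn f g {z | 0 < z.re} := by
  have isOpen_re_pos : IsOpen {z : ℂ | 0 < z.re} := isOpen_lt continuous_const continuous_re
  refine (hf.analyticOnNhd isOpen_re_pos).eqOn_of_preconnected_of_frequently_eq
    (hg.analyticOnNhd isOpen_re_pos) (convex_halfSpace_re_gt 0).isPreconnected
    (z₀ := ((1 : ℝ) : ℂ)) (by simp) ?_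
  have tendsto_ofReal : Tendsto ((↑) : ℝ → ℂ) (𝓝[≠] 1) (𝓝[≠] ((1 : ℝ) : ℂ)) :=
    continuous_ofReal.continuousWithinAt.tendsto_nhdsWithin fun r hr ↦ ofReal_injective.ne hr
  refine tendsto_ofReal.frequently (Eventually.frequently ?_)
  filter_upwards [nhdsWithin_le_nhds (Ioi_mem_nhds one_pos)] with r hr using hfg r hr

end HolomorphicIntegral

section GammaIntegral

variable {s r c : ℂ}

lemma norm_cpow_mul_exp_neg_mul (s r : ℂ) {x : ℝ} (hx : 0 < x) :
    ‖(x : ℂ) ^ (s - 1) * Complex.exp (-(r * x))‖ = x ^ (s.re - 1) * Real.exp (-(r.re * x)) := by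
  simp [norm_cpow_eq_rpow_re_of_pos hx, Complex.norm_exp]

lemma integrableOn_rpow_mul_exp_neg_mul {σ b : ℝ} (hσ : 0 < σ) (hb : 0 < b) :
    IntegrableOn (fun x : ℝ ↦ x ^ (σ - 1) * Real.exp (-(b * x))) (Ioi 0) := by
  simpa using integrableOn_rpow_mul_exp_neg_mul_rpow (s := σ - 1) (by linarith) one_pos hb

lemma integrableOn_cpow_mul_exp_neg_mul (hs : 0 < s.re) (hr : 0 < r.re) :
    IntegrableOn (fun x : ℝ ↦ (x : ℂ) ^ (s - 1) * Complex.exp (-(r * x))) (Ioi 0) := by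
  refine (integrableOn_rpow_mul_exp_neg_mul hs hr).mono' ?_ ?_
  · exact (by fun_prop : Measurable _).aestronglyMeasurable
  · filter_upwards [ae_restrict_mem measurableSet_Ioi] with x hx
    exact (norm_cpow_mul_exp_neg_mul s r hx).le

lemma differentiableOn_integral_cpow_mul_exp_neg_mul (hs : 0 < s.re) :
    DifferentiableOn ℂ
      (fun r : ℂ ↦ ∫ x in Ioi (0 : ℝ), (x : ℂ) ^ (s - 1) * Complex.exp (-(r * x)))
      {r | 0 < r.re} := by
  intro r₀ (hr₀ : 0 < r₀.re)
  have isOpen_halfPlane : IsOpen {r : ℂ | r₀.re / 2 < r.re} :=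
    isOpen_lt continuous_const continuous_re
  have hr₀_mem : r₀ ∈ {r : ℂ | r₀.re / 2 < r.re} := half_lt_self hr₀
  refine (((differentiableOn_integral_of_dominated isOpen_halfPlane ?_ ?_ ?_
    (integrableOn_rpow_mul_exp_neg_mul hs (half_pos hr₀))).differentiableAt
    (isOpen_halfPlane.mem_nhds hr₀_mem))).differentiableWithinAt
  · exact fun r hr ↦
      (integrableOn_cpow_mul_exp_neg_mul hs ((half_pos hr₀).trans hr)).aestronglyMeasurable
  · exact .of_forall fun x ↦ by fun_prop
  · filter_upwards [ae_restrict_mem measurableSet_Ioi] with x (hx : 0 < x) r (hr : _ < _)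
    rw [norm_cpow_mul_exp_neg_mul s r hx]
    gcongr

theorem integral_cpow_mul_exp_neg_mul_Ioi_of_re_pos (hs : 0 < s.re) (hr : 0 < r.re) :
    ∫ x in Ioi (0 : ℝ), (x : ℂ) ^ (s - 1) * Complex.exp (-(r * x)) =
      Complex.Gamma s * r ^ (-s) := by
  refine eqOn_re_pos_of_eq_ofReal (g := fun r ↦ Complex.Gamma s * r ^ (-s))
    (differentiableOn_integral_cpow_mul_exp_neg_mul hs) (fun z hz ↦ ?_) (fun b hb ↦ ?_) hr
  · exact ((differentiableAt_id.cpow_const (Or.inl hz)).const_mul _).differentiableWithinAt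
  · rw [Complex.integral_cpow_mul_exp_neg_mul_Ioi hs hb, one_div, cpow_neg,
      inv_cpow _ _ (by simp [arg_ofReal_of_nonneg hb.le, pi_ne_zero.symm]), mul_comm]

lemma cpow_mul_exp_neg_mul_mul_sin (s c t x : ℂ) :
    x ^ (s - 1) * Complex.exp (-(c * x)) * Complex.sin (x * t) =
      (x ^ (s - 1) * Complex.exp (-((c + t * I) * x)) -
        x ^ (s - 1) * Complex.exp (-((c - t * I) * x))) * (I / 2) := by
  rw [Complex.sin, show -((c + t * I) * x) = -(c * x) + -(x * t) * I by ring,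
    show -((c - t * I) * x) = -(c * x) + x * t * I by ring, Complex.exp_add, Complex.exp_add]
  ring

lemma integrableOn_cpow_mul_exp_neg_mul_mul_sin (hs : 0 < s.re) (hc : 0 < c.re) (t : ℝ) :
    IntegrableOn (fun x : ℝ ↦ (x : ℂ) ^ (s - 1) * Complex.exp (-(c * x)) * Complex.sin (x * t))
      (Ioi 0) := by
  simp only [cpow_mul_exp_neg_mul_mul_sin]
  exact ((integrableOn_cpow_mul_exp_neg_mul hs (by simpa using hc)).sub
    (integrableOn_cpow_mul_exp_neg_mul hs (by simpa using hc))).mul_const _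

theorem integral_cpow_mul_exp_neg_mul_mul_sin (hs : 0 < s.re) (hc : 0 < c.re) (t : ℝ) :
    ∫ x in Ioi (0 : ℝ), (x : ℂ) ^ (s - 1) * Complex.exp (-(c * x)) * Complex.sin (x * t) =
      Complex.Gamma s * (((c + t * I) ^ (-s) - (c - t * I) ^ (-s)) * (I / 2)) := by
  have hadd : 0 < (c + t * I).re := by simpa using hc
  have hsub : 0 < (c - t * I).re := by simpa using hc
  simp only [cpow_mul_exp_neg_mul_mul_sin]
  rw [integral_mul_const, integral_sub (integrableOn_cpow_mul_exp_neg_mul hs hadd)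
    (integrableOn_cpow_mul_exp_neg_mul hs hsub),
    integral_cpow_mul_exp_neg_mul_Ioi_of_re_pos hs hadd,
    integral_cpow_mul_exp_neg_mul_Ioi_of_re_pos hs hsub]
  ring

end GammaIntegral

section Polar

lemma arg_eq_arctan {z : ℂ} (hz : 0 < z.re) : arg z = Real.arctan (z.im / z.re) := by
  obtain ⟨hlower, hupper⟩ := abs_lt.1 (abs_arg_lt_pi_div_two_iff.2 (.inl hz))
  rw [← tan_arg, Real.arctan_tan hlower hupper]

lemma cpow_neg_eq_exp_arctan {z : ℂ} (hz : 0 < z.re) (s : ℂ) :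
    z ^ (-s) =
      Complex.exp (-(s * Real.arctan (z.im / z.re)) * I) / (normSq z : ℂ) ^ (s / 2) := by
  have z_ne_zero : z ≠ 0 := ne_zero_of_re_pos hz
  have normSq_ne_zero : (normSq z : ℂ) ≠ 0 := by simpa using z_ne_zero
  have log_normSq : Complex.log (normSq z) = 2 * Real.log ‖z‖ := by
    rw [normSq_eq_norm_sq, ← ofReal_log (sq_nonneg _), Real.log_pow]
    norm_cast
  rw [cpow_def_of_ne_zero z_ne_zero, cpow_def_of_ne_zero normSq_ne_zero, log_normSq,
    ← Complex.exp_sub, Complex.log, arg_eq_arctan hz]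
  congr 1
  ring

lemma cpow_neg_sub_cpow_neg {a : ℝ} (ha : 0 < a) (s : ℂ) (t : ℝ) :
    (((a : ℂ) + t * I) ^ (-s) - ((a : ℂ) - t * I) ^ (-s)) * (I / 2) =
      Complex.sin (s * Real.arctan (t / a)) / ((a ^ 2 + t ^ 2 : ℝ) : ℂ) ^ (s / 2) := by
  have normSq_add : normSq ((a : ℂ) + t * I) = a ^ 2 + t ^ 2 := normSq_add_mul_I a t
  have normSq_sub : normSq ((a : ℂ) - t * I) = a ^ 2 + t ^ 2 := by
    simpa [sub_eq_add_neg] using normSq_add_mul_I a (-t)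
  rw [cpow_neg_eq_exp_arctan (by simpa using ha), cpow_neg_eq_exp_arctan (by simpa using ha),
    normSq_add, normSq_sub, Complex.sin]
  simp only [add_re, sub_re, add_im, sub_im, ofReal_re, ofReal_im, re_ofReal_mul, im_ofReal_mul,
    I_re, I_im, mul_zero, mul_one, add_zero, sub_zero, zero_add, zero_sub, neg_div,
    Real.arctan_neg, ofReal_neg, mul_neg, neg_neg, neg_mul]
  ring

end Polar

section LegendreFormula

lemma norm_exp_neg_lt_one {z : ℂ} (hz : 0 < z.re) : ‖Complex.exp (-z)‖ < 1 := by
  simpa [Complex.norm_exp] using hz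

lemma one_sub_exp_neg_ne_zero {z : ℂ} (hz : 0 < z.re) : 1 - Complex.exp (-z) ≠ 0 :=
  fun h ↦ (norm_exp_neg_lt_one hz).ne (by rw [← sub_eq_zero.1 h, norm_one])

lemma hasSum_exp_neg_nat_mul {z : ℂ} (hz : 0 < z.re) :
    HasSum (fun n : ℕ ↦ Complex.exp (-(n * z))) (1 - Complex.exp (-z))⁻¹ := by
  simpa only [← Complex.exp_nat_mul, mul_neg] using
    hasSum_geometric_of_norm_lt_one (norm_exp_neg_lt_one hz)

lemma hasSum_exp_neg_succ_mul {z : ℂ} (hz : 0 < z.re) :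
    HasSum (fun n : ℕ ↦ Complex.exp (-((n + 1) * z))) (Complex.exp z - 1)⁻¹ := by
  have exp_sub_one : Complex.exp z - 1 = Complex.exp z * (1 - Complex.exp (-z)) := by
    rw [mul_sub, ← Complex.exp_add, add_neg_cancel, Complex.exp_zero, mul_one]
  rw [exp_sub_one, mul_inv, ← Complex.exp_neg]
  refine ((hasSum_exp_neg_nat_mul hz).mul_left (Complex.exp (-z))).congr_fun fun n ↦ ?_
  rw [← Complex.exp_add]
  ring_nf

lemma inv_one_sub_exp_neg_eq_cot {x : ℂ} (hx : 0 < x.re) :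
    (1 - Complex.exp (-x))⁻¹ = 1 / 2 + I / 2 * Complex.cot (I * x / 2) := by
  have two_I_mul : 2 * I * (I * x / 2) = -x := by linear_combination x * I_sq
  have one_sub_exp_ne_zero := one_sub_exp_neg_ne_zero hx
  rw [cot_eq_exp_ratio, two_I_mul]
  field_simp
  ring

lemma div_sq_add_sq_eq_one_div_sub_add_one_div_add {x c : ℂ} (hadd : I * x + c ≠ 0)
    (hsub : I * x - c ≠ 0) :
    x / (x ^ 2 + c ^ 2) = I / 2 * (1 / (I * x - c) + 1 / (I * x + c)) := by
  have factor : x ^ 2 + c ^ 2 = -((I * x - c) * (I * x + c)) := by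
    linear_combination x ^ 2 * I_sq
  have factor_ne_zero : (I * x - c) * (I * x + c) ≠ 0 := mul_ne_zero hsub hadd
  rw [factor, one_div_add_one_div hsub hadd, mul_div_assoc',
    div_eq_div_iff (neg_ne_zero.2 factor_ne_zero) factor_ne_zero]
  linear_combination x * ((I * x - c) * (I * x + c)) * I_sq

lemma tsum_div_sq_add_sq {x : ℂ} (hx : 0 < x.re) :
    2 * ∑' n : ℕ, x / (x ^ 2 + (2 * π * (n + 1)) ^ 2) =
      (1 - Complex.exp (-x))⁻¹ - 1 / 2 - 1 / x := by
  have hπ : (π : ℂ) ≠ 0 := ofReal_ne_zero.2 pi_ne_zero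
  set u := I * x / (2 * π) with hu
  have hu_im : 0 < u.im := by
    have : u.im = x.re / (2 * π) := by
      rw [hu, ← ofReal_ofNat, ← ofReal_mul, div_ofReal_im, I_mul_im]
    rw [this]
    positivity
  have hu_compl : u ∈ integerComplement := UpperHalfPlane.coe_mem_integerComplement ⟨u, hu_im⟩
  have I_mul_x : I * x = 2 * π * u := by rw [hu]; field_simp
  have term_eq (n : ℕ) : x / (x ^ 2 + (2 * π * (n + 1)) ^ 2) =
      I / (4 * π) * (1 / (u - (n + 1)) + 1 / (u + (n + 1))) := by
    have hadd : u + (n + 1) ≠ 0 := mod_cast integerComplement_add_ne_zero hu_compl (n + 1)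
    have hsub : u - (n + 1) ≠ 0 := by
      simpa [sub_eq_add_neg] using integerComplement_add_ne_zero hu_compl (-(n + 1))
    have hπ2 : (2 * π : ℂ) ≠ 0 := mul_ne_zero two_ne_zero hπ
    rw [div_sq_add_sq_eq_one_div_sub_add_one_div_add, I_mul_x, ← mul_sub, ← mul_add]
    · field_simp
      ring
    · rw [I_mul_x, ← mul_add]
      exact mul_ne_zero hπ2 hadd
    · rw [I_mul_x, ← mul_sub]
      exact mul_ne_zero hπ2 hsub
  have I_div_u : I / (2 * π * u) = 1 / x := by
    rw [← I_mul_x, div_mul_cancel_left₀ I_ne_zero, one_div]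
  have pi_mul_u : π * u = I * x / 2 := by rw [I_mul_x]; ring
  simp only [term_eq]
  rw [tsum_mul_left, ← cot_series_rep' hu_compl, inv_one_sub_exp_neg_eq_cot hx, pi_mul_u,
    ← I_div_u]
  field_simp
  ring

lemma integral_norm_exp_neg_mul_mul_sin_le {c : ℝ} (hc : 0 < c) (x : ℝ) :
    ∫ t in Ioi (0 : ℝ), ‖Complex.exp (-(c * t)) * Complex.sin (t * x)‖ ≤ |x| / c ^ 2 := by
  have integrable_majorant := (integrableOn_rpow_mul_exp_neg_mul two_pos hc).const_mul |x|
  calc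
    _ ≤ ∫ t in Ioi (0 : ℝ), |x| * (t ^ ((2 : ℝ) - 1) * Real.exp (-(c * t))) := by
      refine integral_mono_of_nonneg (.of_forall fun t ↦ norm_nonneg _) integrable_majorant ?_
      filter_upwards [ae_restrict_mem measurableSet_Ioi] with t (ht : 0 < t)
      have abs_sin_le : |Real.sin (t * x)| ≤ t * |x| := by
        simpa [abs_mul, abs_of_pos ht] using Real.abs_sin_le_abs (x := t * x)
      calc
        _ = Real.exp (-(c * t)) * |Real.sin (t * x)| := by
          rw [norm_mul, Complex.norm_exp, ← ofReal_mul, ← ofReal_mul, ← ofReal_sin, norm_real,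
            Real.norm_eq_abs, ← ofReal_neg, ofReal_re]
        _ ≤ Real.exp (-(c * t)) * (t * |x|) := by gcongr
        _ = |x| * (t ^ ((2 : ℝ) - 1) * Real.exp (-(c * t))) := by norm_num; ring
    _ = |x| / c ^ 2 := by
      rw [integral_const_mul, Real.integral_rpow_mul_exp_neg_mul_Ioi two_pos hc, Real.Gamma_two,
        Real.rpow_two]
      field_simp

lemma integrableOn_exp_neg_mul_mul_sin {c : ℝ} (hc : 0 < c) (x : ℝ) :
    IntegrableOn (fun t : ℝ ↦ Complex.exp (-(c * t)) * Complex.sin (t * x)) (Ioi 0) := by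
  simpa using integrableOn_cpow_mul_exp_neg_mul_mul_sin (s := 1) (c := c) (by simp)
    (by simpa using hc) x

lemma integral_exp_neg_mul_mul_sin {c : ℝ} (hc : 0 < c) (x : ℝ) :
    ∫ t in Ioi (0 : ℝ), Complex.exp (-(c * t)) * Complex.sin (t * x) =
      x / (x ^ 2 + c ^ 2) := by
  have hadd : (c : ℂ) + x * I ≠ 0 := ne_zero_of_re_pos (by simpa using hc)
  have hsub : (c : ℂ) - x * I ≠ 0 := ne_zero_of_re_pos (by simpa using hc)
  have factor : (x : ℂ) ^ 2 + c ^ 2 = (c + x * I) * (c - x * I) := by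
    linear_combination (x ^ 2 : ℂ) * I_sq
  have := integral_cpow_mul_exp_neg_mul_mul_sin (s := 1) (c := c) (by simp) (by simpa using hc) x
  simp only [sub_self, cpow_zero, one_mul, Complex.Gamma_one, cpow_neg_one] at this
  rw [this, factor]
  field_simp
  linear_combination (-2 * x : ℂ) * I_sq

theorem legendre_formula {x : ℝ} (hx : 0 < x) :
    (1 - Complex.exp (-x))⁻¹ = 1 / 2 + 1 / (x : ℂ) +
      2 * ∫ t in Ioi (0 : ℝ), Complex.sin (x * t) / ((Real.exp (2 * π * t) - 1 : ℝ) : ℂ) := by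
  set c : ℕ → ℝ := fun n ↦ 2 * π * (n + 1) with hc_def
  have hc (n : ℕ) : 0 < c n := by positivity
  have summable_norm : Summable fun n : ℕ ↦
      ∫ t in Ioi (0 : ℝ), ‖Complex.exp (-(c n * t)) * Complex.sin (t * x)‖ := by
    refine .of_nonneg_of_le (fun n ↦ integral_nonneg fun t ↦ norm_nonneg _)
      (fun n ↦ integral_norm_exp_neg_mul_mul_sin_le (hc n) x) ?_
    have summable_inv_sq := (summable_nat_add_iff 1).2 (Real.summable_one_div_nat_pow.2 one_lt_two)
    refine (summable_inv_sq.mul_left (|x| / (2 * π) ^ 2)).congr fun n ↦ ?_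
    simp only [hc_def]
    push_cast
    field_simp
  have integrand_eq : ∀ t ∈ Ioi (0 : ℝ),
      Complex.sin (x * t) / ((Real.exp (2 * π * t) - 1 : ℝ) : ℂ) =
        ∑' n, Complex.exp (-(c n * t)) * Complex.sin (t * x) := fun t ht ↦ by
    have hre : 0 < ((2 * π * t : ℝ) : ℂ).re := mul_pos two_pi_pos ht
    have c_mul (n : ℕ) : (c n : ℂ) * t = (n + 1) * (2 * π * t : ℝ) := by
      simp only [hc_def]
      push_cast
      ring
    simp only [c_mul]
    rw [((hasSum_exp_neg_succ_mul hre).mul_right _).tsum_eq, div_eq_inv_mul, mul_comm (x : ℂ)]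
    push_cast
    rfl
  have hasSum_integral := hasSum_integral_of_summable_integral_norm
    (fun n ↦ integrableOn_exp_neg_mul_mul_sin (hc n) x) summable_norm
  simp only [integral_exp_neg_mul_mul_sin (hc _)] at hasSum_integral
  have partial_fractions := tsum_div_sq_add_sq (x := x) (by simpa using hx)
  rw [setIntegral_congr_fun measurableSet_Ioi integrand_eq, ← hasSum_integral.tsum_eq]
  simp only [hc_def]
  push_cast
  rw [partial_fractions]
  ring

end LegendreFormula

section HermiteIntegral

/-- The integrand of Hermite's integral for `ζ(s, a)`, as a function of `t > 0`. At `t = 0` the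
denominator vanishes, so the value there is `0`. -/
noncomputable def hermiteKernel (s : ℂ) (a t : ℝ) : ℂ :=
  Complex.sin (s * (Real.arctan (t / a) : ℂ)) /
    (((a ^ 2 + t ^ 2 : ℝ) : ℂ) ^ (s / 2) * ((Real.exp (2 * π * t) - 1 : ℝ) : ℂ))

lemma exp_two_pi_mul_sub_one_pos {t : ℝ} (ht : 0 < t) : 0 < Real.exp (2 * π * t) - 1 :=
  sub_pos.2 (Real.one_lt_exp_iff.2 (by positivity))

lemma div_exp_two_pi_mul_sub_one_le {t : ℝ} (ht : 0 < t) :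
    t / (Real.exp (2 * π * t) - 1) ≤ Real.exp (-(π * t)) := by
  have exp_eq_sinh : Real.exp (2 * π * t) - 1 = 2 * Real.exp (π * t) * Real.sinh (π * t) := by
    rw [Real.sinh_eq, Real.exp_neg, mul_assoc 2 π t, two_mul, Real.exp_add]
    field_simp
  have le_sinh : t ≤ 2 * Real.sinh (π * t) := by
    have := Real.self_le_sinh_iff.2 (by positivity : 0 ≤ π * t)
    nlinarith [pi_gt_three]
  rw [div_le_iff₀ (exp_two_pi_mul_sub_one_pos ht), exp_eq_sinh, Real.exp_neg]
  field_simp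
  rwa [mul_comm t π]

lemma integrable_cpow_mul_exp_mul_sin_div {a : ℝ} (ha : 0 < a) {s : ℂ} (hs : 0 < s.re) :
    Integrable (fun p : ℝ × ℝ ↦ (p.1 : ℂ) ^ (s - 1) * Complex.exp (-(a * p.1)) *
      (Complex.sin (p.1 * p.2) / ((Real.exp (2 * π * p.2) - 1 : ℝ) : ℂ)))
      ((volume.restrict (Ioi 0)).prod (volume.restrict (Ioi 0))) := by
  have majorant := (integrableOn_rpow_mul_exp_neg_mul (σ := s.re + 1) (by linarith) ha).mul_prod
    (exp_neg_integrableOn_Ioi 0 pi_pos)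
  refine majorant.mono' (by fun_prop : Measurable _).aestronglyMeasurable ?_
  rw [Measure.prod_restrict]
  filter_upwards [ae_restrict_mem (measurableSet_Ioi.prod measurableSet_Ioi)]
    with ⟨x, t⟩ ⟨(hx : 0 < x), (ht : 0 < t)⟩
  have hexp := exp_two_pi_mul_sub_one_pos ht
  have abs_sin_le : |Real.sin (x * t)| ≤ x * t := by
    simpa [abs_mul, abs_of_pos, hx, ht] using Real.abs_sin_le_abs (x := x * t)
  calc
    _ = x ^ (s.re - 1) * Real.exp (-(a * x)) *
        (|Real.sin (x * t)| / (Real.exp (2 * π * t) - 1)) := by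
      rw [norm_mul, norm_cpow_mul_exp_neg_mul s a hx, ofReal_re, norm_div, ← ofReal_mul,
        ← ofReal_sin, norm_real, norm_real, Real.norm_eq_abs, Real.norm_of_nonneg hexp.le]
    _ ≤ x ^ (s.re - 1) * Real.exp (-(a * x)) * (x * t / (Real.exp (2 * π * t) - 1)) := by gcongr
    _ = x ^ s.re * Real.exp (-(a * x)) * (t / (Real.exp (2 * π * t) - 1)) := by
      rw [Real.rpow_sub_one hx.ne']
      field_simp
    _ ≤ x ^ s.re * Real.exp (-(a * x)) * Real.exp (-(π * t)) := by
      gcongr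
      exact div_exp_two_pi_mul_sub_one_le ht
    _ = _ := by simp

lemma integral_cpow_mul_exp_mul_sin_div {a : ℝ} (ha : 0 < a) {s : ℂ} (hs : 0 < s.re) (t : ℝ) :
    ∫ x in Ioi (0 : ℝ), (x : ℂ) ^ (s - 1) * Complex.exp (-(a * x)) *
        (Complex.sin (x * t) / ((Real.exp (2 * π * t) - 1 : ℝ) : ℂ)) =
      Complex.Gamma s * hermiteKernel s a t := by
  simp only [← mul_div_assoc]
  rw [integral_div, integral_cpow_mul_exp_neg_mul_mul_sin hs (by simpa using ha),
    cpow_neg_sub_cpow_neg ha, hermiteKernel, mul_div_assoc, div_div]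

end HermiteIntegral

section Hurwitz

variable {a : ℝ} {s : ℂ}

lemma hasSum_HZ (ha : 0 < a) (hs : 1 < s.re) :
    HasSum (fun n : ℕ ↦ 1 / ((n : ℂ) + a) ^ s) (HZ s a) := by
  obtain ⟨N, hN⟩ : ∃ N : ℕ, ⌈a⌉ - 1 = N :=
    Int.eq_ofNat_of_zero_le (Int.sub_nonneg_of_le (Int.ceil_pos.2 ha))
  have ceil_eq : ⌈a⌉ = N + 1 := by lia
  have fract_mem : a - N ∈ Icc (0 : ℝ) 1 := by
    have ceil_eq' : (⌈a⌉ : ℝ) = N + 1 := mod_cast ceil_eq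
    constructor <;> linarith [Int.ceil_lt_add_one a, Int.le_ceil a]
  have coe_fract : ((a - N : ℝ) : UnitAddCircle) = a := by
    have coe_N : ((N : ℝ) : UnitAddCircle) = 0 := (AddCircle.coe_eq_zero_iff _).2 ⟨N, by simp⟩
    rw [AddCircle.coe_sub, coe_N, sub_zero]
  have hasSum_tail := (hasSum_nat_add_iff' N).2
    (HurwitzZeta.hasSum_hurwitzZeta_of_one_lt_re fract_mem hs)
  rw [coe_fract] at hasSum_tail
  have HZ_eq : HZ s a = HurwitzZeta.hurwitzZeta (a : UnitAddCircle) s -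
      ∑ j ∈ Finset.range N, 1 / (j + (a - N : ℝ) : ℂ) ^ s := by
    rw [HZ, hN, Int.toNat_natCast, ceil_eq]
    congr 1
    refine Finset.sum_congr rfl fun j _ ↦ ?_
    rw [cpow_neg, one_div]
    push_cast
    ring_nf
  rw [HZ_eq]
  refine hasSum_tail.congr_fun fun n ↦ ?_
  push_cast
  ring_nf

lemma differentiableAt_HZ (a : ℝ) (hs : s ≠ 1) : DifferentiableAt ℂ (HZ · a) s := by
  refine (HurwitzZeta.differentiableAt_hurwitzZeta _ hs).sub (.fun_sum fun j _ ↦ ?_)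
  have base_pos : 0 < a - (⌈a⌉ - 1) + j := by
    linarith [Int.ceil_lt_add_one a, (Nat.cast_nonneg j : (0 : ℝ) ≤ j)]
  exact differentiableAt_id.neg.const_cpow (.inl (mod_cast base_pos.ne'))

lemma Gamma_mul_HZ (ha : 0 < a) (hs : 1 < s.re) :
    Complex.Gamma s * HZ s a =
      ∫ x in Ioi (0 : ℝ),
        (x : ℂ) ^ (s - 1) * Complex.exp (-(a * x)) * (1 - Complex.exp (-x))⁻¹ := by
  have hasSum_series := hasSum_HZ ha hs
  have geometric_series : ∀ x ∈ Ioi (0 : ℝ),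
      HasSum (fun n : ℕ ↦ (1 : ℂ) * Real.exp (-(n + a) * x))
        (Complex.exp (-(a * x)) * (1 - Complex.exp (-x))⁻¹) := fun x hx ↦ by
    refine ((hasSum_exp_neg_nat_mul (z := x) (by simpa using hx)).mul_left _).congr_fun fun n ↦ ?_
    rw [← Complex.exp_add]
    push_cast
    ring_nf
  have summable_norm : Summable fun n : ℕ ↦ ‖(1 : ℂ)‖ / ((n : ℝ) + a) ^ s.re := by
    refine hasSum_series.summable.norm.congr fun n ↦ ?_
    rw [norm_div, ← norm_cpow_eq_rpow_re_of_pos (by positivity)]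
    push_cast
    rfl
  have hasSum_transform := hasSum_mellin (fun n ↦ .inr (by positivity)) (by linarith)
    geometric_series summable_norm
  calc
    _ = mellin (fun x : ℝ ↦ Complex.exp (-(a * x)) * (1 - Complex.exp (-x))⁻¹) s :=
      (hasSum_series.mul_left _).unique
        (by simpa only [mul_one, mul_one_div, ofReal_add, ofReal_natCast] using hasSum_transform)
    _ = _ := by simp only [mellin, smul_eq_mul, mul_assoc]

end Hurwitz

section HalfPlane

variable {a : ℝ} {s : ℂ}

lemma integral_integral_sin_div_eq_Gamma_mul (ha : 0 < a) (hs : 0 < s.re) :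
    ∫ x in Ioi (0 : ℝ), ∫ t in Ioi (0 : ℝ), (x : ℂ) ^ (s - 1) * Complex.exp (-(a * x)) *
        (Complex.sin (x * t) / ((Real.exp (2 * π * t) - 1 : ℝ) : ℂ)) =
      Complex.Gamma s * ∫ t in Ioi (0 : ℝ), hermiteKernel s a t := by
  rw [integral_integral_swap (integrable_cpow_mul_exp_mul_sin_div ha hs)]
  simp only [integral_cpow_mul_exp_mul_sin_div ha hs]
  exact integral_const_mul _ _

lemma cpow_mul_exp_neg_mul_inv_one_sub_exp_neg (a : ℝ) (s : ℂ) {x : ℝ} (hx : 0 < x) :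
    (x : ℂ) ^ (s - 1) * Complex.exp (-(a * x)) * (1 - Complex.exp (-x))⁻¹ =
      (x : ℂ) ^ (s - 1) * Complex.exp (-(a * x)) * (1 / 2) +
        (x : ℂ) ^ (s - 1 - 1) * Complex.exp (-(a * x)) +
        2 * ∫ t in Ioi (0 : ℝ), (x : ℂ) ^ (s - 1) * Complex.exp (-(a * x)) *
          (Complex.sin (x * t) / ((Real.exp (2 * π * t) - 1 : ℝ) : ℂ)) := by
  rw [legendre_formula hx, integral_const_mul, cpow_sub (s - 1) 1 (ofReal_ne_zero.2 hx.ne'),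
    cpow_one]
  ring

lemma Gamma_mul_HZ_eq (ha : 0 < a) (hs : 1 < s.re) :
    Complex.Gamma s * HZ s a =
      Complex.Gamma s * (a : ℂ) ^ (-s) * (1 / 2) + Complex.Gamma (s - 1) * (a : ℂ) ^ (-(s - 1)) +
        2 * (Complex.Gamma s * ∫ t in Ioi (0 : ℝ), hermiteKernel s a t) := by
  have s_re_pos : 0 < s.re := one_pos.trans hs
  have s_sub_one_re_pos : 0 < (s - 1).re := by simpa using hs
  have a_re_pos : 0 < (a : ℂ).re := ha
  have integrable_half := (integrableOn_cpow_mul_exp_neg_mul s_re_pos a_re_pos).mul_const (1 / 2)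
  have integrable_shift := integrableOn_cpow_mul_exp_neg_mul s_sub_one_re_pos a_re_pos
  have integrable_sin := (integrable_cpow_mul_exp_mul_sin_div ha s_re_pos).integral_prod_left
  rw [Gamma_mul_HZ ha hs, setIntegral_congr_fun measurableSet_Ioi
      fun x hx ↦ cpow_mul_exp_neg_mul_inv_one_sub_exp_neg a s hx,
    integral_add (by exact integrable_half.add integrable_shift)
      (by exact integrable_sin.const_mul 2),
    integral_add integrable_half integrable_shift, integral_mul_const, integral_const_mul,
    integral_integral_sin_div_eq_Gamma_mul ha s_re_pos,
    integral_cpow_mul_exp_neg_mul_Ioi_of_re_pos s_re_pos a_re_pos,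
    integral_cpow_mul_exp_neg_mul_Ioi_of_re_pos s_sub_one_re_pos a_re_pos]

theorem HZ_eq_of_one_lt_re (ha : 0 < a) (hs : 1 < s.re) :
    HZ s a = (a : ℂ) ^ (-s) / 2 + (a : ℂ) ^ (1 - s) / (s - 1) +
      2 * ∫ t in Ioi (0 : ℝ), hermiteKernel s a t := by
  have s_sub_one_ne_zero : s - 1 ≠ 0 := ne_zero_of_re_pos (by simpa using hs)
  have Gamma_s : Complex.Gamma s = (s - 1) * Complex.Gamma (s - 1) := by
    simpa using Complex.Gamma_add_one (s - 1) s_sub_one_ne_zero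
  refine mul_left_cancel₀ (Complex.Gamma_ne_zero_of_re_pos (one_pos.trans hs)) ?_
  rw [Gamma_mul_HZ_eq ha hs, neg_sub, Gamma_s]
  field_simp

end HalfPlane

section Continuation

open Filter Topology

lemma norm_sin_le_norm_mul_exp_norm (z : ℂ) : ‖Complex.sin z‖ ≤ ‖z‖ * Real.exp ‖z‖ := by
  have norm_exp_sub_one_le (w : ℂ) : ‖Complex.exp w - 1‖ ≤ ‖w‖ * Real.exp ‖w‖ := by
    simpa using Complex.norm_exp_sub_sum_le_norm_mul_exp w 1
  calc
    _ = ‖(Complex.exp (-z * I) - 1) - (Complex.exp (z * I) - 1)‖ / 2 := by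
      rw [Complex.sin, sub_sub_sub_cancel_right]
      simp
    _ ≤ (‖-z * I‖ * Real.exp ‖-z * I‖ + ‖z * I‖ * Real.exp ‖z * I‖) / 2 := by
      gcongr
      exact (norm_sub_le _ _).trans (add_le_add (norm_exp_sub_one_le _) (norm_exp_sub_one_le _))
    _ = _ := by simp

lemma arctan_le_self {x : ℝ} (hx : 0 ≤ x) : Real.arctan x ≤ x := by
  simpa using Real.le_tan (Real.arctan_nonneg.2 hx) (Real.arctan_lt_pi_div_two x)

lemma rpow_le_rpow_add_rpow_neg {x y m : ℝ} (hx : 0 < x) (hy : |y| ≤ m) :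
    x ^ y ≤ x ^ m + x ^ (-m) := by
  obtain ⟨neg_le, le⟩ := abs_le.1 hy
  rcases le_total 1 x with one_le | le_one
  · exact (Real.rpow_le_rpow_of_exponent_le one_le le).trans
      (le_add_of_nonneg_right (by positivity))
  · exact (Real.rpow_le_rpow_of_exponent_ge hx le_one neg_le).trans
      (le_add_of_nonneg_left (by positivity))

lemma integrableOn_sq_add_sq_rpow_mul_exp_neg_mul {a b : ℝ} (ha : a ≠ 0) (hb : 0 < b) (m : ℝ) :
    IntegrableOn (fun t ↦ (a ^ 2 + t ^ 2) ^ m * Real.exp (-(b * t))) (Ioi 0) := by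
  have base_isTheta : (fun t : ℝ ↦ a ^ 2 + t ^ 2) =Θ[atTop] fun t ↦ t ^ 2 := by
    refine Asymptotics.IsLittleO.add_isTheta ?_ (Asymptotics.isTheta_refl _ _)
    exact Asymptotics.isLittleO_const_left.2
      (.inr (tendsto_norm_atTop_atTop.comp (tendsto_pow_atTop two_ne_zero)))
  have rpow_isBigO : (fun t : ℝ ↦ (a ^ 2 + t ^ 2) ^ m) =O[atTop] fun t ↦ Real.exp (b / 2 * t) := by
    refine (base_isTheta.rpow (.of_forall fun t ↦ by positivity)
      (.of_forall fun t ↦ sq_nonneg t)).isBigO.trans ?_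
    refine (isLittleO_rpow_exp_pos_mul_atTop (2 * m) (half_pos hb)).isBigO.congr' ?_ .rfl
    filter_upwards [eventually_ge_atTop 0] with t ht
    rw [Real.rpow_mul ht, Real.rpow_two]
  refine integrable_of_isBigO_exp_neg (half_pos hb) ?_ ?_
  · have base_ne_zero (t : ℝ) : a ^ 2 + t ^ 2 ≠ 0 := by positivity
    exact ((Continuous.rpow_const (by fun_prop) fun t ↦ .inl (base_ne_zero t)).mul
      (by fun_prop)).continuousOn
  · refine (rpow_isBigO.mul (Asymptotics.isBigO_refl _ _)).congr_right fun t ↦ ?_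
    rw [← Real.exp_add]
    ring_nf

lemma norm_hermiteKernel_le {a t M : ℝ} {s : ℂ} (ha : 0 < a) (ht : 0 < t) (hs : ‖s‖ ≤ M) :
    ‖hermiteKernel s a t‖ ≤ M / a * Real.exp (M * 2) *
      (((a ^ 2 + t ^ 2) ^ (M / 2) + (a ^ 2 + t ^ 2) ^ (-(M / 2))) * Real.exp (-(π * t))) := by
  have M_nonneg : 0 ≤ M := (norm_nonneg s).trans hs
  set X := a ^ 2 + t ^ 2
  have X_pos : 0 < X := by positivity
  have E_pos := exp_two_pi_mul_sub_one_pos ht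
  have arctan_nonneg : 0 ≤ Real.arctan (t / a) := Real.arctan_nonneg.2 (by positivity)
  have arctan_le_two : Real.arctan (t / a) ≤ 2 := by
    linarith [Real.arctan_lt_pi_div_two (t / a), pi_lt_four]
  have norm_sin_le : ‖Complex.sin (s * Real.arctan (t / a))‖ ≤ M * (t / a) * Real.exp (M * 2) := by
    refine (norm_sin_le_norm_mul_exp_norm _).trans ?_
    rw [norm_mul, norm_real, Real.norm_of_nonneg arctan_nonneg]
    gcongr
    exact arctan_le_self (by positivity)
  have rpow_le : X ^ (-(s / 2).re) ≤ X ^ (M / 2) + X ^ (-(M / 2)) := by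
    refine rpow_le_rpow_add_rpow_neg X_pos ?_
    have := (abs_re_le_norm s).trans hs
    simp only [div_ofNat_re, abs_neg, abs_div, Nat.abs_ofNat]
    gcongr
  calc
    _ = ‖Complex.sin (s * Real.arctan (t / a))‖ * X ^ (-(s / 2).re) *
        (Real.exp (2 * π * t) - 1)⁻¹ := by
      rw [hermiteKernel, norm_div, norm_mul, norm_cpow_eq_rpow_re_of_pos X_pos, norm_real,
        Real.norm_of_nonneg E_pos.le, Real.rpow_neg X_pos.le, div_eq_mul_inv, mul_inv,
        ← mul_assoc]
    _ ≤ M * (t / a) * Real.exp (M * 2) * (X ^ (M / 2) + X ^ (-(M / 2))) *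
        (Real.exp (2 * π * t) - 1)⁻¹ := by gcongr
    _ = M / a * Real.exp (M * 2) * ((X ^ (M / 2) + X ^ (-(M / 2))) *
        (t / (Real.exp (2 * π * t) - 1))) := by ring
    _ ≤ _ := by
      gcongr
      exact div_exp_two_pi_mul_sub_one_le ht

lemma differentiable_hermiteKernel {a : ℝ} (ha : a ≠ 0) (t : ℝ) :
    Differentiable ℂ (hermiteKernel · a t) := by
  have base_ne_zero : ((a ^ 2 + t ^ 2 : ℝ) : ℂ) ≠ 0 := ofReal_ne_zero.2 (by positivity)
  have cpow_ne_zero (s : ℂ) : ((a ^ 2 + t ^ 2 : ℝ) : ℂ) ^ (s / 2) ≠ 0 :=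
    cpow_ne_zero_iff.2 (.inl base_ne_zero)
  have differentiable_cpow : Differentiable ℂ fun s : ℂ ↦ ((a ^ 2 + t ^ 2 : ℝ) : ℂ) ^ (s / 2) :=
    fun s ↦ (differentiableAt_id.div_const 2).const_cpow (.inl base_ne_zero)
  have differentiable_sin : Differentiable ℂ fun s ↦ Complex.sin (s * Real.arctan (t / a)) := by
    fun_prop
  simp only [hermiteKernel, ← div_div]
  exact (differentiable_sin.div differentiable_cpow cpow_ne_zero).div_const _

lemma measurable_hermiteKernel (s : ℂ) (a : ℝ) : Measurable (hermiteKernel s a) := by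
  unfold hermiteKernel
  fun_prop

theorem differentiable_integral_hermiteKernel {a : ℝ} (ha : 0 < a) :
    Differentiable ℂ fun s ↦ ∫ t in Ioi (0 : ℝ), hermiteKernel s a t := by
  intro s
  set M := ‖s‖ + 1
  have s_mem : s ∈ Metric.ball 0 M := by simp [M]
  have integrable_majorant : IntegrableOn (fun t ↦ M / a * Real.exp (M * 2) *
      (((a ^ 2 + t ^ 2) ^ (M / 2) + (a ^ 2 + t ^ 2) ^ (-(M / 2))) * Real.exp (-(π * t))))
      (Ioi 0) := by
    simp only [add_mul]
    exact ((integrableOn_sq_add_sq_rpow_mul_exp_neg_mul ha.ne' pi_pos _).add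
      (integrableOn_sq_add_sq_rpow_mul_exp_neg_mul ha.ne' pi_pos _)).const_mul _
  refine (differentiableOn_integral_of_dominated Metric.isOpen_ball
    (fun z _ ↦ (measurable_hermiteKernel z a).aestronglyMeasurable)
    (.of_forall fun t ↦ (differentiable_hermiteKernel ha.ne' t).differentiableOn) ?_
    integrable_majorant).differentiableAt (Metric.isOpen_ball.mem_nhds s_mem)
  filter_upwards [ae_restrict_mem measurableSet_Ioi] with t ht z hz
  exact norm_hermiteKernel_le ha ht (mem_ball_zero_iff.1 hz).le

lemma differentiableOn_cpow_add_integral_hermiteKernel {a : ℝ} (ha : 0 < a) :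
    DifferentiableOn ℂ (fun s ↦ (a : ℂ) ^ (-s) / 2 + (a : ℂ) ^ (1 - s) / (s - 1) +
      2 * ∫ t in Ioi (0 : ℝ), hermiteKernel s a t) {1}ᶜ := by
  have a_ne_zero : (a : ℂ) ≠ 0 := ofReal_ne_zero.2 ha.ne'
  have differentiable_cpow_neg : Differentiable ℂ fun s : ℂ ↦ (a : ℂ) ^ (-s) :=
    differentiable_id.neg.const_cpow (.inl a_ne_zero)
  have differentiable_cpow_one_sub : Differentiable ℂ fun s : ℂ ↦ (a : ℂ) ^ (1 - s) :=
    (differentiable_id.const_sub 1).const_cpow (.inl a_ne_zero)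
  refine ((differentiable_cpow_neg.div_const 2).differentiableOn.add
    (differentiable_cpow_one_sub.differentiableOn.div (by fun_prop) fun s hs ↦ ?_)).add
    ((differentiable_integral_hermiteKernel ha).const_mul 2).differentiableOn
  exact sub_ne_zero.2 hs

end Continuation

theorem stmt_2 (a : ℝ) (ha : 0 < a) (s : ℂ) (hs : s ≠ 1) :
    HZ s a = (a : ℂ) ^ (-s) / 2 + (a : ℂ) ^ (1 - s) / (s - 1) +
      2 * ∫ t in Ioi (0 : ℝ),
        Complex.sin (s * (Real.arctan (t / a) : ℂ)) /
          (((a ^ 2 + t ^ 2 : ℝ) : ℂ) ^ (s / 2) * ((Real.exp (2 * π * t) - 1 : ℝ) : ℂ)) := by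
  have analyticOnNhd_HZ : AnalyticOnNhd ℂ (HZ · a) {1}ᶜ :=
    DifferentiableOn.analyticOnNhd
      (fun z hz ↦ (differentiableAt_HZ a hz).differentiableWithinAt) isOpen_compl_singleton
  have analyticOnNhd_hermite :=
    (differentiableOn_cpow_add_integral_hermiteKernel ha).analyticOnNhd isOpen_compl_singleton
  have isPreconnected_compl_one : IsPreconnected ({1}ᶜ : Set ℂ) :=
    (isConnected_compl_singleton_of_one_lt_rank (by simp) 1).isPreconnected
  have one_lt_re_near_two : ∀ᶠ z : ℂ in nhds 2, 1 < z.re :=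
    (isOpen_lt continuous_const continuous_re).mem_nhds (by norm_num)
  have two_mem_compl_one : (2 : ℂ) ∈ ({1}ᶜ : Set ℂ) := by norm_num
  exact analyticOnNhd_HZ.eqOn_of_preconnected_of_eventuallyEq analyticOnNhd_hermite
    isPreconnected_compl_one two_mem_compl_one
    (one_lt_re_near_two.mono fun z hz ↦ HZ_eq_of_one_lt_re ha hz) hs
end

section
/- For w > 0, ∫₀^∞ sin(wt)/sinh(πt) dt = (1/2) tanh(w/2). -/
open Real MeasureTheory Set

/-!
For `t > 0` the geometric series gives `1 / sinh (a * t) = 2 * ∑ₙ exp (-(2 * n + 1) * a * t)`.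
Integrating it termwise against `sin (w * t)` produces `∑ₙ 2 * w / (w ^ 2 + ((2 * n + 1) * a) ^ 2)`.
By `tan θ = cot θ - 2 * cot (2 * θ)`, the Mittag-Leffler expansion of the cotangent yields that of
the tangent, with poles at the odd integers only; evaluated at `(w / a) * I` it is the series above.
-/

theorem norm_cos_le_cosh_im (z : ℂ) : ‖Complex.cos z‖ ≤ cosh z.im := by
  rw [Complex.cos, norm_div, Complex.norm_two, cosh_eq]
  gcongr
  refine (norm_add_le _ _).trans_eq ?_
  simp [Complex.norm_exp, add_comm]

theorem norm_sin_le_norm_mul_cosh_im (z : ℂ) : ‖Complex.sin z‖ ≤ ‖z‖ * cosh z.im := by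
  have hderiv_le : ∀ ζ ∈ segment ℝ 0 z, ‖Complex.cos ζ‖ ≤ cosh z.im := by
    rintro ζ ⟨s, r, hs, hr, hsr, rfl⟩
    refine (norm_cos_le_cosh_im _).trans (cosh_le_cosh.2 ?_)
    have : |r| ≤ 1 := by rw [abs_of_nonneg hr]; linarith
    simpa [abs_mul] using mul_le_of_le_one_left (abs_nonneg z.im) this
  simpa [mul_comm] using (convex_segment (0 : ℂ) z).norm_image_sub_le_of_norm_hasDerivWithin_le
    (fun ζ _ ↦ (Complex.hasDerivAt_sin ζ).hasDerivWithinAt) hderiv_le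
    (left_mem_segment ℝ 0 z) (right_mem_segment ℝ 0 z)

theorem self_div_sinh_le {x : ℝ} (hx : 0 < x) : x / sinh x ≤ (1 + 2 * x) * exp (-x) := by
  have hexp : exp (-x) * exp (-x) * (1 + 2 * x) ≤ 1 := by
    have := add_one_le_exp (2 * x)
    calc exp (-x) * exp (-x) * (1 + 2 * x) ≤ exp (-x) * exp (-x) * exp (2 * x) := by
          gcongr; linarith
      _ = 1 := by rw [← exp_add, ← exp_add, ← exp_zero]; congr 1; ring
  have hinv : exp x * exp (-x) = 1 := by rw [← exp_add, add_neg_cancel, exp_zero]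
  rw [div_le_iff₀ (sinh_pos_iff.2 hx), sinh_eq]
  linear_combination hexp / 2 - (1 + 2 * x) / 2 * hinv

theorem hasSum_two_mul_exp_neg_odd_mul {x : ℝ} (hx : 0 < x) :
    HasSum (fun n : ℕ ↦ 2 * exp (-((2 * n + 1) * x))) (sinh x)⁻¹ := by
  have hlt : exp (-(2 * x)) < 1 := Real.exp_lt_one_iff.2 (by linarith)
  have hsq : exp (-(2 * x)) = exp (-x) * exp (-x) := by rw [← exp_add]; ring_nf
  have hinv : exp x * exp (-x) = 1 := by rw [← exp_add, add_neg_cancel, exp_zero]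
  have hsinh : sinh x * (2 * exp (-x)) = 1 - exp (-(2 * x)) := by
    rw [sinh_eq, hsq]
    linear_combination hinv
  convert! (hasSum_geometric_of_lt_one (exp_nonneg _) hlt).mul_left (2 * exp (-x)) using 1
  · ext n
    rw [← exp_nat_mul, mul_assoc, ← exp_add]
    ring_nf
  · rw [← hsinh]
    field_simp [(sinh_pos_iff.2 hx).ne']

section TermwiseIntegration

variable {E : Type*} [NormedAddCommGroup E] [NormedSpace ℝ E]

theorem hasSum_integral_exp_smul_of_integrableOn_inv_sinh_smul {a : ℝ} (ha : 0 < a) {f : ℝ → E}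
    (hf : IntegrableOn (fun t ↦ (sinh (a * t))⁻¹ • f t) (Ioi 0)) :
    HasSum (fun n : ℕ ↦ ∫ t in Ioi 0, (2 * exp (-((2 * n + 1) * (a * t)))) • f t)
      (∫ t in Ioi 0, (sinh (a * t))⁻¹ • f t) := by
  have hpos : ∀ᵐ t ∂volume.restrict (Ioi (0 : ℝ)), 0 < a * t :=
    (ae_restrict_mem measurableSet_Ioi).mono fun t ht ↦ mul_pos ha ht
  have hf_meas : AEStronglyMeasurable f (volume.restrict (Ioi 0)) := by
    have hsinh : Continuous fun t ↦ sinh (a * t) := by fun_prop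
    refine (hsinh.aestronglyMeasurable.smul hf.aestronglyMeasurable).congr ?_
    filter_upwards [hpos] with t ht
    exact smul_inv_smul₀ (sinh_pos_iff.2 ht).ne' (f t)
  have hnorm : ∀ᵐ t ∂volume.restrict (Ioi (0 : ℝ)),
      HasSum (fun n : ℕ ↦ ‖(2 * exp (-((2 * n + 1) * (a * t)))) • f t‖)
        ‖(sinh (a * t))⁻¹ • f t‖ := by
    filter_upwards [hpos] with t ht
    simp_rw [norm_smul]
    rw [norm_of_nonneg (inv_nonneg.2 (sinh_pos_iff.2 ht).le)]
    refine HasSum.mul_right _ ?_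
    simpa [abs_of_pos] using hasSum_two_mul_exp_neg_odd_mul ht
  refine hasSum_integral_of_dominated_convergence
    (fun n t ↦ ‖(2 * exp (-((2 * n + 1) * (a * t)))) • f t‖) (fun n ↦ ?_)
    (fun n ↦ ae_of_all _ fun t ↦ le_rfl) (hnorm.mono fun t ht ↦ ht.summable)
    (hf.norm.congr (hnorm.mono fun t ht ↦ ht.tsum_eq.symm)) ?_
  · exact Continuous.aestronglyMeasurable (by fun_prop) |>.smul hf_meas
  · filter_upwards [hpos] with t ht
    exact (hasSum_two_mul_exp_neg_odd_mul ht).smul_const (f t)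

end TermwiseIntegration

theorem integrableOn_one_add_mul_mul_exp_neg_mul (k : ℝ) {c : ℝ} (hc : 0 < c) :
    IntegrableOn (fun t ↦ (1 + k * t) * exp (-c * t)) (Ioi 0) := by
  have h₀ : IntegrableOn (fun t : ℝ ↦ exp (-c * t)) (Ioi 0) :=
    integrableOn_exp_mul_Ioi (neg_neg_iff_pos.2 hc) 0
  have h₁ : IntegrableOn (fun t : ℝ ↦ t * exp (-c * t)) (Ioi 0) := by
    simpa using integrableOn_rpow_mul_exp_neg_mul_rpow (s := 1) (p := 1) (by norm_num) one_pos hc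
  refine (h₀.add (h₁.const_mul k)).congr (ae_of_all _ fun t ↦ ?_)
  simp only [Pi.add_apply]
  ring

theorem norm_inv_sinh_smul_sin_le {a t : ℝ} (ha : 0 < a) (ht : 0 < t) (w : ℂ) :
    ‖(sinh (a * t))⁻¹ • Complex.sin (w * t)‖ ≤
      ‖w‖ / a * ((1 + 2 * a * t) * exp (-(a - |w.im|) * t)) := by
  have hat : 0 < a * t := mul_pos ha ht
  have hcosh : cosh (w * t).im ≤ exp (|w.im| * t) := by
    rw [← cosh_abs, Complex.im_mul_ofReal, abs_mul, abs_of_pos ht, ← cosh_add_sinh]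
    exact le_add_of_nonneg_right (by positivity)
  calc ‖(sinh (a * t))⁻¹ • Complex.sin (w * t)‖
      = (sinh (a * t))⁻¹ * ‖Complex.sin (w * t)‖ := by
        rw [norm_smul, norm_of_nonneg (inv_nonneg.2 (sinh_pos_iff.2 hat).le)]
    _ ≤ (sinh (a * t))⁻¹ * (‖w * t‖ * exp (|w.im| * t)) := by
        have := sinh_pos_iff.2 hat
        gcongr
        exact (norm_sin_le_norm_mul_cosh_im _).trans (by gcongr)
    _ = ‖w‖ / a * (a * t / sinh (a * t)) * exp (|w.im| * t) := by
        rw [norm_mul, Complex.norm_of_nonneg ht.le]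
        field_simp
    _ ≤ ‖w‖ / a * ((1 + 2 * (a * t)) * exp (-(a * t))) * exp (|w.im| * t) := by
        gcongr
        exact self_div_sinh_le hat
    _ = ‖w‖ / a * ((1 + 2 * a * t) * exp (-(a - |w.im|) * t)) := by
        rw [mul_assoc, mul_assoc _ (exp _), ← exp_add]
        ring_nf

theorem integrableOn_inv_sinh_smul_sin {a : ℝ} {w : ℂ} (hw : |w.im| < a) :
    IntegrableOn (fun t : ℝ ↦ (sinh (a * t))⁻¹ • Complex.sin (w * t)) (Ioi 0) := by
  have ha : 0 < a := (abs_nonneg _).trans_lt hw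
  refine ((integrableOn_one_add_mul_mul_exp_neg_mul (2 * a) (sub_pos.2 hw)).const_mul
    (‖w‖ / a)).mono' (by fun_prop) ?_
  filter_upwards [ae_restrict_mem measurableSet_Ioi] with t ht
  exact norm_inv_sinh_smul_sin_le ha ht w

theorem integral_exp_neg_mul_sin {s w : ℂ} (hw : |w.im| < s.re) :
    ∫ t : ℝ in Ioi 0, Complex.exp (-(s * t)) * Complex.sin (w * t) = w / (w ^ 2 + s ^ 2) := by
  obtain ⟨him, him'⟩ := abs_lt.1 hw
  have hre₁ : (-w * Complex.I - s).re < 0 := by simpa using by linarith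
  have hre₂ : (w * Complex.I - s).re < 0 := by simpa using by linarith
  have hne {z : ℂ} (hz : z.re < 0) : z ≠ 0 := by rintro rfl; simp at hz
  have hexp (t : ℝ) : Complex.exp (-(s * t)) * Complex.sin (w * t) = Complex.I / 2 *
      (Complex.exp ((-w * Complex.I - s) * t) - Complex.exp ((w * Complex.I - s) * t)) := by
    have hfactor (u : ℂ) :
        Complex.exp ((u - s) * t) = Complex.exp (-(s * t)) * Complex.exp (u * t) := by
      rw [← Complex.exp_add]
      ring_nf
    rw [hfactor, hfactor, Complex.sin]
    ring_nf
  have hden : w ^ 2 + s ^ 2 = (-w * Complex.I - s) * (w * Complex.I - s) := by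
    linear_combination w ^ 2 * Complex.I_sq
  simp_rw [hexp]
  rw [integral_const_mul, integral_sub (integrableOn_exp_mul_complex_Ioi hre₁ 0)
    (integrableOn_exp_mul_complex_Ioi hre₂ 0), integral_exp_mul_complex_Ioi hre₁,
    integral_exp_mul_complex_Ioi hre₂, hden, div_sub_div _ _ (hne hre₁) (hne hre₂),
    mul_div_assoc']
  congr 1
  simp only [Complex.ofReal_zero, mul_zero, Complex.exp_zero]
  linear_combination (-w) * Complex.I_sq

theorem cot_sub_two_mul_cot_two_mul (z : ℂ) :
    Complex.cot z - 2 * Complex.cot (2 * z) = Complex.tan z := by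
  rw [Complex.cot, Complex.cot, Complex.tan_eq_sin_div_cos, Complex.cos_two_mul',
    Complex.sin_two_mul]
  rcases eq_or_ne (Complex.sin z) 0 with hsin | hsin
  · simp [hsin]
  rcases eq_or_ne (Complex.cos z) 0 with hcos | hcos
  · simp [hcos]
  field_simp
  ring

theorem hasSum_cotTerm {z : ℂ} (hz : z ∈ Complex.integerComplement) :
    HasSum (cotTerm z) (π * Complex.cot (π * z) - 1 / z) := by
  rw [cot_series_rep' hz]
  exact (summable_cotTerm hz).hasSum

theorem hasSum_tan_partial_fractions {z : ℂ} (hz : z ∈ Complex.integerComplement) :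
    HasSum (fun n : ℕ ↦ 1 / (2 * n + 1 - z) - 1 / (2 * n + 1 + z))
      (π / 2 * Complex.tan (π * z / 2)) := by
  have hz_half : z / 2 ∈ Complex.integerComplement := by
    rintro ⟨n, hn⟩
    exact hz ⟨2 * n, by push_cast; rw [hn]; ring⟩
  have hodd : HasSum (fun n : ℕ ↦ cotTerm z (2 * n + 1))
      (1 / 2 * (π * Complex.cot (π * (z / 2)) - 1 / (z / 2))) := by
    refine ((hasSum_cotTerm hz_half).mul_left (1 / 2)).congr_fun fun n ↦ ?_
    have hsub : z - (2 * n + 1 + 1) = 2 * (z / 2 - (n + 1)) := by ring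
    have hadd : z + (2 * n + 1 + 1) = 2 * (z / 2 + (n + 1)) := by ring
    simp only [cotTerm]
    push_cast
    rw [hsub, hadd, mul_add (1 / 2 : ℂ), one_div_mul_one_div, one_div_mul_one_div]
  have heven : HasSum (fun n : ℕ ↦ cotTerm z (2 * n)) (-(π / 2 * Complex.tan (π * z / 2))) := by
    have hsummable : Summable fun n : ℕ ↦ cotTerm z (2 * n) :=
      (summable_cotTerm hz).comp_injective (mul_right_injective₀ two_ne_zero)
    have htotal := (hsummable.hasSum.even_add_odd hodd).unique (hasSum_cotTerm hz)
    have hcot := cot_sub_two_mul_cot_two_mul (π * z / 2)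
    rw [mul_div_cancel₀ _ two_ne_zero] at hcot
    have hvalue : ∑' n : ℕ, cotTerm z (2 * n) = -(π / 2 * Complex.tan (π * z / 2)) := by
      rw [eq_sub_of_add_eq htotal, ← hcot]
      field_simp
      ring
    exact hvalue ▸ hsummable.hasSum
  rw [← neg_neg (π / 2 * Complex.tan (π * z / 2))]
  refine heven.neg.congr_fun fun n ↦ ?_
  rw [cotTerm, ← neg_sub z, div_neg, add_comm (2 * n + 1 : ℂ) z]
  push_cast
  ring

theorem hasSum_tanh_partial_fractions {a w : ℂ}
    (h : w / a * Complex.I ∈ Complex.integerComplement) :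
    HasSum (fun n : ℕ ↦ 2 * w / (w ^ 2 + ((2 * n + 1) * a) ^ 2))
      (π / (2 * a) * Complex.tanh (π * w / (2 * a))) := by
  have ha : a ≠ 0 := by
    rintro rfl
    simpa using Complex.integerComplement.ne_zero h
  have htan : Complex.tan (π * (w / a * Complex.I) / 2) =
      Complex.tanh (π * w / (2 * a)) * Complex.I := by
    rw [← Complex.tan_mul_I]
    congr 1
    field_simp
  convert! (hasSum_tan_partial_fractions h).mul_left (-Complex.I / a) using 1
  · ext n
    have hsub : (2 * n + 1 : ℂ) - w / a * Complex.I ≠ 0 := by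
      simpa [sub_eq_neg_add, add_comm] using
        neg_ne_zero.2 (Complex.integerComplement_add_ne_zero h (-(2 * n + 1)))
    have hadd : (2 * n + 1 : ℂ) + w / a * Complex.I ≠ 0 := by
      simpa [add_comm] using Complex.integerComplement_add_ne_zero h (2 * n + 1)
    have hden : w ^ 2 + ((2 * n + 1) * a) ^ 2 =
        a ^ 2 * ((2 * n + 1 - w / a * Complex.I) * (2 * n + 1 + w / a * Complex.I)) := by
      field_simp
      linear_combination w ^ 2 * Complex.I_sq
    rw [hden, div_sub_div _ _ hsub hadd, ← div_div, mul_div_assoc']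
    congr 1
    linear_combination 2 * w / a ^ 2 * Complex.I_sq
  · rw [htan]
    linear_combination π / (2 * a) * Complex.tanh (π * w / (2 * a)) * Complex.I_sq

theorem div_mul_I_mem_integerComplement {a : ℝ} {w : ℂ} (hw₀ : w ≠ 0) (hw : |w.im| < a) :
    w / a * Complex.I ∈ Complex.integerComplement := by
  have ha : 0 < a := (abs_nonneg _).trans_lt hw
  have haC : (a : ℂ) ≠ 0 := by exact_mod_cast ha.ne'
  rintro ⟨n, hn⟩
  have hw_eq : w = -(n * a) * Complex.I := by
    rw [hn]
    field_simp
    linear_combination Complex.I_sq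
  have him : |(n : ℝ)| * a < 1 * a := by
    simpa [hw_eq, abs_mul, abs_of_pos ha] using hw
  have hn₀ : n = 0 := Int.abs_lt_one_iff.1 (by exact_mod_cast lt_of_mul_lt_mul_right him ha.le)
  exact hw₀ (by simp [hw_eq, hn₀])

theorem stmt_12_general {a : ℝ} {w : ℂ} (hw : |w.im| < a) :
    ∫ t : ℝ in Ioi 0, Complex.sin (w * t) / Complex.sinh (a * t) =
      π / (2 * a) * Complex.tanh (π * w / (2 * a)) := by
  rcases eq_or_ne w 0 with rfl | hw₀
  · simp
  have ha : 0 < a := (abs_nonneg _).trans_lt hw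
  have hterm (n : ℕ) :
      ∫ t : ℝ in Ioi 0, (2 * exp (-((2 * n + 1) * (a * t)))) • Complex.sin (w * t) =
        2 * w / (w ^ 2 + ((2 * n + 1) * a) ^ 2) := by
    have hwn : |w.im| < ((2 * n + 1) * a : ℂ).re := by
      have hre : ((2 * n + 1) * a : ℂ).re = (2 * n + 1) * a := by simp
      have : 0 ≤ n * a := by positivity
      linarith
    rw [mul_div_assoc, ← integral_exp_neg_mul_sin hwn, ← integral_const_mul]
    simp only [Complex.real_smul]
    push_cast
    simp only [mul_assoc]
  have hexpansion := hasSum_integral_exp_smul_of_integrableOn_inv_sinh_smul ha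
    (integrableOn_inv_sinh_smul_sin hw)
  simp_rw [hterm] at hexpansion
  rw [← hexpansion.unique
    (hasSum_tanh_partial_fractions (div_mul_I_mem_integerComplement hw₀ hw))]
  simp [Complex.real_smul, div_eq_inv_mul]

theorem stmt_12 (w : ℝ) (hw : 0 < w) :
    ∫ t in Ioi (0 : ℝ), Real.sin (w * t) / Real.sinh (π * t) =
      (1 / 2) * Real.tanh (w / 2) := by
  apply Complex.ofReal_injective
  simpa [← integral_complex_ofReal, mul_comm 2 (π : ℂ), mul_div_mul_left, div_mul_cancel_left₀]
    using stmt_12_general (a := π) (w := w) (by simpa using pi_pos)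
end
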